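/- Let n ≥ 2, 1 ≤ s < ∞, let Ω ⊆ ℝⁿ be a bounded domain, and let 𝒯 be a family of essential tubes for Ω, the tube T ∈ 𝒯 having parameters r_T, l_T, c_T, such that the corresponding components Ω_T are pairwise disjoint. If Σ_{T∈𝒯} c_T · (r_T)ⁿ · (l_T/r_T)^{s+1} = ∞, then for every point z₀ ∈ Ω one has ∫_Ω k(z, z₀; Ω)^s dz = ∞. -/

import Mathlib

open MeasureTheory Metric Set
open scoped ENNReal

/-- The quasihyperbolic distance `k(z, z₀; Ω)`: the infimum, over all Lipschitz curves
`γ : [0,1] → Ω` joining `z` to `z₀`, of `∫ ‖γ'(t)‖ / d(γ(t), ∂Ω) dt`. -/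
noncomputable def qhDist {n : ℕ} (Ω : Set (EuclideanSpace ℝ (Fin n)))
    (z z₀ : EuclideanSpace ℝ (Fin n)) : ℝ :=
  sInf {L : ℝ | ∃ γ : ℝ → EuclideanSpace ℝ (Fin n),
    (∃ K : NNReal, LipschitzWith K γ) ∧ γ 0 = z ∧ γ 1 = z₀ ∧
    (∀ t ∈ Set.Icc (0:ℝ) 1, γ t ∈ Ω) ∧
    L = ∫ t in (0:ℝ)..1, ‖deriv γ t‖ / Metric.infDist (γ t) (frontier Ω)}

/-- The distance of `z` from the first coordinate axis. -/
noncomputable def radial {n : ℕ} [NeZero n] (z : EuclideanSpace ℝ (Fin n)) : ℝ :=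
  Real.sqrt (∑ i ∈ Finset.univ.erase (0 : Fin n), z i ^ 2)

/-- The standard cylinder `[0, l] × D_r^{n-1}` in `ℝⁿ`, the first coordinate being the axis. -/
def stdCylinder {n : ℕ} [NeZero n] (l r : ℝ) : Set (EuclideanSpace ℝ (Fin n)) :=
  {z | z 0 ∈ Set.Icc (0:ℝ) l ∧ radial z ≤ r}

/-- The wall `[0, l] × ∂D_r^{n-1}` of the standard cylinder. -/
def stdWall {n : ℕ} [NeZero n] (l r : ℝ) : Set (EuclideanSpace ℝ (Fin n)) :=
  {z | z 0 ∈ Set.Icc (0:ℝ) l ∧ radial z = r}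

/-- The `t`-th slice `{t} × D_r^{n-1}` of the standard cylinder. -/
def stdSlice {n : ℕ} [NeZero n] (r t : ℝ) : Set (EuclideanSpace ℝ (Fin n)) :=
  {z | z 0 = t ∧ radial z ≤ r}

/-- `T = φ '' stdCylinder l r` is an essential tube for `Ω` with parameters `l, r, c` and
corresponding component `ΩT`: `ΩT` is a connected component of `T ∩ Ω` missing the wall of `T`,
and each slice of `ΩT` has `(n-1)`-dimensional (Hausdorff) measure at least `c` times that of
the corresponding slice of the tube (an isometric copy of `D_r^{n-1}`). -/
structure IsEssentialTube {n : ℕ} [NeZero n] (Ω : Set (EuclideanSpace ℝ (Fin n)))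
    (φ : EuclideanSpace ℝ (Fin n) ≃ᵢ EuclideanSpace ℝ (Fin n))
    (l r c : ℝ) (ΩT : Set (EuclideanSpace ℝ (Fin n))) : Prop where
  l_pos : 0 < l
  r_pos : 0 < r
  c_pos : 0 < c
  isComp : ∃ p ∈ (φ '' stdCylinder l r) ∩ Ω,
    ΩT = connectedComponentIn ((φ '' stdCylinder l r) ∩ Ω) p
  wall_disjoint : ΩT ∩ (φ '' stdWall l r) = ∅
  slice_meas : ∀ t ∈ Set.Icc (0:ℝ) l,
    ENNReal.ofReal c * μH[(n:ℝ) - 1] (φ '' stdSlice r t) ≤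
      μH[(n:ℝ) - 1] (ΩT ∩ φ '' stdSlice r t)

/-!
For a component `ΩT` of a tube of length `l` and radius `r`, let `u` be the axial distance to the
nearer end on `ΩT`, and `0` on the rest of `Ω`. As `ΩT` avoids the wall, it can be left inside `Ω`
only through the two ends, where `u` vanishes; so `u` is locally `1`-Lipschitz on `Ω`. A segment of
length `2r` perpendicular to the axis leaves the tube, hence `Ω`, so `d(x, ∂Ω) ≤ 2r` on `ΩT`.
Integrating along curves, `u z ≤ 2r · k(z, z₀; Ω)` for `z ∈ ΩT` and `z₀ ∉ ΩT`. On the middle half of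
`ΩT`, of volume at least a constant times `c rⁿ⁻¹ l`, this gives `k ≥ l / (8r)`, so `ΩT` contributes
at least a constant times `c rⁿ (l/r)^(s+1)` to the integral; at most one component contains `z₀`.
-/

open scoped NNReal Pointwise Topology

section LipschitzCurves

variable {E : Type*} [NormedAddCommGroup E] {U : Set E} {x y z : E}

/-- The Lipschitz analogue of `JoinedIn`: `x` and `y` are joined by a Lipschitz curve in `U`. The
curve is a globally Lipschitz map `ℝ → E` of which only the values on `[0, 1]` must lie in `U`, to
match the curves in `qhDist`. -/
def LipschitzJoinedIn (U : Set E) (x y : E) : Prop :=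
  ∃ γ : ℝ → E, (∃ K : ℝ≥0, LipschitzWith K γ) ∧ γ 0 = x ∧ γ 1 = y ∧ ∀ t ∈ Icc (0 : ℝ) 1, γ t ∈ U

namespace LipschitzJoinedIn

theorem symm (h : LipschitzJoinedIn U x y) : LipschitzJoinedIn U y x := by
  obtain ⟨γ, ⟨K, hγ⟩, h0, h1, hU⟩ := h
  refine ⟨fun t => γ (1 - t), ⟨_, hγ.comp ((LipschitzWith.const 1).sub LipschitzWith.id)⟩,
    by simpa using h1, by simpa using h0, fun t ht => hU _ ⟨?_, ?_⟩⟩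
  · linarith [ht.2]
  · linarith [ht.1]

theorem trans (hxy : LipschitzJoinedIn U x y) (hyz : LipschitzJoinedIn U y z) :
    LipschitzJoinedIn U x z := by
  obtain ⟨γ₁, ⟨K₁, hγ₁⟩, hx, hy₁, hU₁⟩ := hxy
  obtain ⟨γ₂, ⟨K₂, hγ₂⟩, hy₂, hz, hU₂⟩ := hyz
  have hdouble : LipschitzWith ‖(2 : ℝ)‖₊ fun t : ℝ => 2 * t := lipschitzWith_smul (2 : ℝ)
  have hfst := hγ₁.comp (hdouble.const_min 1)
  have hsnd := hγ₂.comp ((hdouble.sub (LipschitzWith.const 1)).const_max 0)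
  -- Freezing each curve outside its half of `[0, 1]` makes the concatenation a sum.
  refine ⟨fun t => γ₁ (min 1 (2 * t)) + (γ₂ (max 0 (2 * t - 1)) - y),
    ⟨_, hfst.add (hsnd.sub (LipschitzWith.const y))⟩, by simp [hx, hy₂], by norm_num [hy₁, hz],
    fun t ht => ?_⟩
  rcases le_total t (1 / 2) with hle | hge
  · beta_reduce
    rw [max_eq_left (by linarith), min_eq_right (by linarith), hy₂, sub_self, add_zero]
    exact hU₁ _ ⟨by linarith [ht.1], by linarith⟩
  · beta_reduce
    rw [max_eq_right (by linarith), min_eq_left (by linarith), hy₁, add_sub_cancel]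
    exact hU₂ _ ⟨by linarith, by linarith [ht.2]⟩

theorem of_segment_subset [NormedSpace ℝ E] (h : segment ℝ x y ⊆ U) : LipschitzJoinedIn U x y :=
  ⟨AffineMap.lineMap x y, ⟨_, lipschitzWith_lineMap x y⟩, by simp, by simp, fun t ht =>
    h (segment_eq_image_lineMap ℝ x y ▸ mem_image_of_mem _ ht)⟩

theorem of_isOpen_of_isPreconnected [NormedSpace ℝ E] (hU : IsOpen U) (hconn : IsPreconnected U)
    (hx : x ∈ U) (hy : y ∈ U) : LipschitzJoinedIn U x y := by
  refine hconn.induction₂ (LipschitzJoinedIn U) (fun x hx => ?_)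
    (fun _ _ _ _ _ _ => LipschitzJoinedIn.trans) (fun _ _ _ _ => LipschitzJoinedIn.symm) hx hy
  obtain ⟨ε, hε, hball⟩ := Metric.isOpen_iff.1 hU x hx
  filter_upwards [mem_nhdsWithin_of_mem_nhds (ball_mem_nhds x hε)] with y hy
  exact of_segment_subset
    (((convex_ball x ε).segment_subset (mem_ball_self hε) hy).trans hball)

end LipschitzJoinedIn

end LipschitzCurves

section UpperGradients

theorem exists_lipschitzOnWith_of_eventuallyEq {X Y : Type*} [PseudoEMetricSpace X]
    [PseudoEMetricSpace Y] {f g : X → Y} {x : X} {K : ℝ≥0} (hg : LipschitzWith K g)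
    (hfg : f =ᶠ[𝓝 x] g) : ∃ u ∈ 𝓝 x, LipschitzOnWith K f u := by
  refine ⟨_, hfg, fun y hy z hz => ?_⟩
  rw [show f y = g y from hy, show f z = g z from hz]
  exact hg y z

theorem locallyLipschitzOn_comp {X Y Z : Type*} [PseudoEMetricSpace X] [PseudoEMetricSpace Y]
    [PseudoEMetricSpace Z] {f : Y → Z} {g : X → Y} {s : Set X} {t : Set Y}
    (hf : LocallyLipschitzOn t f) (hg : LocallyLipschitzOn s g) (hst : MapsTo g s t) :
    LocallyLipschitzOn s (f ∘ g) := by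
  intro x hx
  obtain ⟨K, u, hu, hfu⟩ := hf (hst hx)
  obtain ⟨L, v, hv, hgv⟩ := hg hx
  exact ⟨K * L, v ∩ g ⁻¹' u,
    Filter.inter_mem hv ((hg.continuousOn x hx).tendsto_nhdsWithin hst hu),
    hfu.comp (hgv.mono inter_subset_left) fun _ h => h.2⟩

variable {E : Type*} [NormedAddCommGroup E] [NormedSpace ℝ E]

theorem norm_hasDerivAt_le_mul_of_eventually {F : Type*} [NormedAddCommGroup F] [NormedSpace ℝ F]
    {f : ℝ → F} {γ : ℝ → E} {f' : F} {γ' : E} {t C : ℝ}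
    (hf : HasDerivAt f f' t) (hγ : HasDerivAt γ γ' t)
    (h : ∀ᶠ u in 𝓝 t, ‖f u - f t‖ ≤ C * ‖γ u - γ t‖) : ‖f'‖ ≤ C * ‖γ'‖ := by
  refine le_of_tendsto_of_tendsto (hasDerivAt_iff_tendsto_slope.1 hf).norm
    ((hasDerivAt_iff_tendsto_slope.1 hγ).norm.const_mul C) ?_
  filter_upwards [nhdsWithin_le_nhds h] with u hu
  simp only [slope, vsub_eq_sub, norm_smul]
  rw [mul_left_comm]
  gcongr

theorem intervalIntegrable_norm_deriv_of_lipschitzWith [CompleteSpace E] {γ : ℝ → E} {K : ℝ≥0}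
    (hγ : LipschitzWith K γ) (a b : ℝ) :
    IntervalIntegrable (fun t => ‖deriv γ t‖) volume a b := by
  have hK : IntervalIntegrable (fun _ : ℝ => (K : ℝ)) volume a b := intervalIntegrable_const
  refine hK.mono_fun (stronglyMeasurable_deriv γ).norm.aestronglyMeasurable ?_
  exact Filter.Eventually.of_forall fun t => by simpa using norm_deriv_le_of_lipschitz hγ

theorem abs_sub_le_integral_mul_norm_deriv [FiniteDimensional ℝ E] {U : Set E} {f g : E → ℝ}
    (hf : LocallyLipschitzOn U f) (hg : ContinuousOn g U)
    (hfg : ∀ x ∈ U, ∀ᶠ y in 𝓝[U] x, |f y - f x| ≤ g x * ‖y - x‖)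
    {γ : ℝ → E} {K : ℝ≥0} (hγ : LipschitzWith K γ) {a b : ℝ} (hab : a ≤ b)
    (hγU : MapsTo γ (Icc a b) U) :
    |f (γ b) - f (γ a)| ≤ ∫ t in a..b, g (γ t) * ‖deriv γ t‖ := by
  obtain ⟨L, hL⟩ := (locallyLipschitzOn_comp hf hγ.locallyLipschitz.locallyLipschitzOn
    hγU).exists_lipschitzOnWith_of_compact isCompact_Icc
  rw [← uIcc_of_le hab] at hL
  have hac := hL.absolutelyContinuousOnInterval
  have hint : IntervalIntegrable (fun t => g (γ t) * ‖deriv γ t‖) volume a b :=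
    (intervalIntegrable_norm_deriv_of_lipschitzWith hγ a b).continuousOn_mul
      (uIcc_of_le hab ▸ hg.comp hγ.continuous.continuousOn hγU)
  have hderiv : ∀ᵐ t, t ∈ Ioo a b → |deriv (f ∘ γ) t| ≤ g (γ t) * ‖deriv γ t‖ := by
    filter_upwards [hac.ae_differentiableAt, hγ.ae_differentiableAt (μ := volume)]
      with t hft hγt ht
    have ht' : t ∈ Icc a b := Ioo_subset_Icc_self ht
    have htend : Filter.Tendsto γ (𝓝 t) (𝓝[U] γ t) :=
      tendsto_nhdsWithin_iff.2 ⟨hγ.continuous.tendsto t,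
        Filter.eventually_of_mem (Icc_mem_nhds ht.1 ht.2) hγU⟩
    exact norm_hasDerivAt_le_mul_of_eventually (hft (uIcc_of_le hab ▸ ht')).hasDerivAt
      hγt.hasDerivAt (htend.eventually (hfg _ (hγU ht')))
  calc |f (γ b) - f (γ a)| = |∫ t in a..b, deriv (f ∘ γ) t| := by
        rw [hac.integral_deriv_eq_sub, Function.comp_apply, Function.comp_apply]
    _ ≤ ∫ t in a..b, |deriv (f ∘ γ) t| := intervalIntegral.abs_integral_le_integral_abs hab
    _ ≤ ∫ t in a..b, g (γ t) * ‖deriv γ t‖ := by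
        refine intervalIntegral.integral_mono_ae_restrict hab hac.intervalIntegrable_deriv.abs
          hint ?_
        rw [Filter.EventuallyLE, ← Measure.restrict_congr_set Ioo_ae_eq_Icc]
        exact (ae_restrict_iff' measurableSet_Ioo).2 hderiv

end UpperGradients

theorem infDist_frontier_pos {X : Type*} [PseudoMetricSpace X] {U : Set X} {x : X} (hU : IsOpen U)
    (hfr : (frontier U).Nonempty) (hx : x ∈ U) : 0 < infDist x (frontier U) :=
  (isClosed_frontier.notMem_iff_infDist_pos hfr).1 fun h => hU.inter_frontier_eq.subset ⟨hx, h⟩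

theorem abs_sub_le_mul_qhDist {n : ℕ} {Ω : Set (EuclideanSpace ℝ (Fin n))} (hΩ : IsOpen Ω)
    (hconn : IsPreconnected Ω) (hfr : (frontier Ω).Nonempty)
    {f : EuclideanSpace ℝ (Fin n) → ℝ} {R : ℝ} (hR : 0 < R) (hf : LocallyLipschitzOn Ω f)
    (hfR : ∀ x ∈ Ω, ∀ᶠ y in 𝓝[Ω] x, |f y - f x| ≤ R / infDist x (frontier Ω) * ‖y - x‖)
    {z z₀ : EuclideanSpace ℝ (Fin n)} (hz : z ∈ Ω) (hz₀ : z₀ ∈ Ω) :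
    |f z - f z₀| ≤ R * qhDist Ω z z₀ := by
  have hcont : ContinuousOn (fun x => R / infDist x (frontier Ω)) Ω :=
    continuousOn_const.div (continuous_infDist_pt _).continuousOn
      fun x hx => (infDist_frontier_pos hΩ hfr hx).ne'
  rw [← div_le_iff₀' hR]
  refine le_csInf ?_ ?_
  · obtain ⟨γ, hγ, h0, h1, hγΩ⟩ := LipschitzJoinedIn.of_isOpen_of_isPreconnected hΩ hconn hz hz₀
    exact ⟨_, γ, hγ, h0, h1, hγΩ, rfl⟩
  · rintro _ ⟨γ, ⟨K, hγ⟩, rfl, rfl, hγΩ, rfl⟩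
    rw [div_le_iff₀' hR, abs_sub_comm]
    refine (abs_sub_le_integral_mul_norm_deriv hf hcont hfR hγ zero_le_one hγΩ).trans_eq ?_
    rw [← intervalIntegral.integral_const_mul]
    exact intervalIntegral.integral_congr fun t _ => div_mul_comm _ _ _ |>.trans (mul_comm _ _)

section Cylinders

variable {n : ℕ} [NeZero n]

theorem continuous_radial : Continuous (radial : EuclideanSpace ℝ (Fin n) → ℝ) := by
  unfold radial
  fun_prop

theorem abs_apply_le_radial {i : Fin n} (hi : i ≠ 0) (z : EuclideanSpace ℝ (Fin n)) :
    |z i| ≤ radial z := by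
  rw [← Real.sqrt_sq_eq_abs]
  exact Real.sqrt_le_sqrt (Finset.single_le_sum (f := fun j => z j ^ 2)
    (fun j _ => sq_nonneg _) (Finset.mem_erase.2 ⟨hi, Finset.mem_univ i⟩))

theorem radial_smul (a : ℝ) (z : EuclideanSpace ℝ (Fin n)) : radial (a • z) = |a| * radial z := by
  simp only [radial, PiLp.smul_apply, smul_eq_mul, mul_pow, ← Finset.mul_sum]
  rw [Real.sqrt_mul (sq_nonneg a), Real.sqrt_sq_eq_abs]

theorem radial_congr {z w : EuclideanSpace ℝ (Fin n)} (h : ∀ i ≠ 0, z i = w i) :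
    radial z = radial w :=
  congrArg Real.sqrt (Finset.sum_congr rfl fun i hi => by rw [h i (Finset.ne_of_mem_erase hi)])

theorem isClosed_stdCylinder (l r : ℝ) :
    IsClosed (stdCylinder l r : Set (EuclideanSpace ℝ (Fin n))) :=
  (isClosed_Icc.preimage (f := fun z : EuclideanSpace ℝ (Fin n) => z 0) (by fun_prop)).inter
    (isClosed_Iic.preimage continuous_radial)

/-- The coordinate along the axis of the tube `φ '' stdCylinder l r`. -/
noncomputable def axialCoord (φ : EuclideanSpace ℝ (Fin n) ≃ᵢ EuclideanSpace ℝ (Fin n))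
    (z : EuclideanSpace ℝ (Fin n)) : ℝ :=
  φ.symm z 0

/-- The distance of `z` from the nearer end of the tube `φ '' stdCylinder l r`, measured along the
axis and extended by `0` beyond the ends. -/
noncomputable def axialDepth (φ : EuclideanSpace ℝ (Fin n) ≃ᵢ EuclideanSpace ℝ (Fin n)) (l : ℝ)
    (z : EuclideanSpace ℝ (Fin n)) : ℝ :=
  max 0 (min (axialCoord φ z) (l - axialCoord φ z))

variable (φ : EuclideanSpace ℝ (Fin n) ≃ᵢ EuclideanSpace ℝ (Fin n)) (l : ℝ)

theorem lipschitzWith_axialCoord : LipschitzWith 1 (axialCoord φ) :=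
  LipschitzWith.mk_one fun x y => by
    rw [← φ.symm.dist_eq x y, dist_eq_norm (φ.symm x)]
    exact PiLp.norm_apply_le (φ.symm x - φ.symm y) 0

theorem lipschitzWith_axialDepth : LipschitzWith 1 (axialDepth φ l) := by
  have hax := lipschitzWith_axialCoord φ
  have hdepth := (hax.min ((LipschitzWith.const l).sub hax)).const_max 0
  rw [zero_add, max_self] at hdepth
  exact hdepth

theorem axialDepth_eq_zero {z : EuclideanSpace ℝ (Fin n)} (hz : axialCoord φ z ∉ Icc 0 l) :
    axialDepth φ l z = 0 := by
  refine max_eq_left (not_lt.1 fun h => hz ?_)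
  rw [lt_min_iff, sub_pos] at h
  exact ⟨h.1.le, h.2.le⟩

end Cylinders

namespace IsEssentialTube

variable {n : ℕ} [NeZero n] {Ω ΩT : Set (EuclideanSpace ℝ (Fin n))}
  {φ : EuclideanSpace ℝ (Fin n) ≃ᵢ EuclideanSpace ℝ (Fin n)} {l r c : ℝ}
  {x z z₀ : EuclideanSpace ℝ (Fin n)}

theorem subset_inter (hT : IsEssentialTube Ω φ l r c ΩT) : ΩT ⊆ φ '' stdCylinder l r ∩ Ω := by
  obtain ⟨p, -, rfl⟩ := hT.isComp
  exact connectedComponentIn_subset _ _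

theorem subset (hT : IsEssentialTube Ω φ l r c ΩT) : ΩT ⊆ Ω :=
  hT.subset_inter.trans inter_subset_right

theorem isConnected (hT : IsEssentialTube Ω φ l r c ΩT) : IsConnected ΩT := by
  obtain ⟨p, hp, rfl⟩ := hT.isComp
  exact isConnected_connectedComponentIn_iff.2 hp

theorem subset_of_isPreconnected (hT : IsEssentialTube Ω φ l r c ΩT)
    {P : Set (EuclideanSpace ℝ (Fin n))} (hP : IsPreconnected P)
    (hsub : P ⊆ φ '' stdCylinder l r ∩ Ω) (hne : (P ∩ ΩT).Nonempty) : P ⊆ ΩT := by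
  obtain ⟨p, -, rfl⟩ := hT.isComp
  obtain ⟨x, hxP, hx⟩ := hne
  rw [connectedComponentIn_eq hx]
  exact hP.subset_connectedComponentIn hxP hsub

theorem eq_closure_inter (hT : IsEssentialTube Ω φ l r c ΩT) : ΩT = closure ΩT ∩ Ω := by
  have hsub : ΩT ⊆ closure ΩT ∩ Ω := fun x hx => ⟨subset_closure hx, hT.subset hx⟩
  have htube : closure ΩT ⊆ φ '' stdCylinder l r :=
    closure_minimal (hT.subset_inter.trans inter_subset_left)
      (φ.toHomeomorph.isClosedMap _ (isClosed_stdCylinder l r))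
  refine hsub.antisymm (hT.subset_of_isPreconnected
    (hT.isConnected.isPreconnected.subset_closure hsub inter_subset_left)
    (inter_subset_inter_left Ω htube) ?_)
  rw [inter_eq_right.2 hsub]
  exact hT.isConnected.nonempty

theorem measurableSet (hT : IsEssentialTube Ω φ l r c ΩT) (hΩ : IsOpen Ω) : MeasurableSet ΩT := by
  rw [hT.eq_closure_inter]
  exact isClosed_closure.measurableSet.inter hΩ.measurableSet

theorem axialCoord_mem_Icc (hT : IsEssentialTube Ω φ l r c ΩT) (hx : x ∈ ΩT) :
    axialCoord φ x ∈ Icc 0 l := by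
  obtain ⟨⟨w, hw, rfl⟩, -⟩ := hT.subset_inter hx
  simpa [axialCoord] using hw.1

theorem radial_lt (hT : IsEssentialTube Ω φ l r c ΩT) (hx : x ∈ ΩT) : radial (φ.symm x) < r := by
  obtain ⟨⟨w, hw, rfl⟩, -⟩ := hT.subset_inter hx
  rw [φ.symm_apply_apply]
  exact hw.2.lt_of_ne fun hwall =>
    eq_empty_iff_forall_notMem.1 hT.wall_disjoint _ ⟨hx, w, ⟨hw.1, hwall⟩, rfl⟩

-- The component avoids the wall, so near its points the tube is a full slab.
theorem eventually_mem (hT : IsEssentialTube Ω φ l r c ΩT) (hΩ : IsOpen Ω) (hx : x ∈ ΩT) :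
    ∀ᶠ y in 𝓝 x, axialCoord φ y ∈ Icc 0 l → y ∈ ΩT := by
  have hopen : IsOpen (φ ⁻¹' Ω ∩ {w | radial w < r}) :=
    (hΩ.preimage φ.continuous).inter (isOpen_lt continuous_radial continuous_const)
  obtain ⟨ε, hε, hball⟩ := Metric.isOpen_iff.1 hopen (φ.symm x)
    ⟨by simpa using hT.subset hx, hT.radial_lt hx⟩
  have hconv : Convex ℝ (ball (φ.symm x) ε ∩ {w | w 0 ∈ Icc 0 l}) :=
    (convex_ball _ _).inter ((convex_Icc 0 l).is_linear_preimage
      (f := fun w : EuclideanSpace ℝ (Fin n) => w 0) ⟨fun _ _ => rfl, fun _ _ => rfl⟩)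
  have hslab : φ '' (ball (φ.symm x) ε ∩ {w | w 0 ∈ Icc 0 l}) ⊆ ΩT := by
    refine hT.subset_of_isPreconnected
      (hconv.isPreconnected.image _ φ.continuous.continuousOn) ?_
      ⟨x, ⟨φ.symm x, ⟨mem_ball_self hε, hT.axialCoord_mem_Icc hx⟩, φ.apply_symm_apply x⟩, hx⟩
    rintro _ ⟨w, ⟨hw, hwl⟩, rfl⟩
    exact ⟨⟨w, ⟨hwl, (hball hw).2.le⟩, rfl⟩, (hball hw).1⟩
  filter_upwards [ball_mem_nhds x hε] with y hy hyl
  exact hslab ⟨φ.symm y, ⟨by rwa [mem_ball, φ.symm.dist_eq], hyl⟩, φ.apply_symm_apply y⟩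

theorem eventually_notMem (hT : IsEssentialTube Ω φ l r c ΩT) (hxΩ : x ∈ Ω) (hx : x ∉ ΩT) :
    ∀ᶠ y in 𝓝 x, y ∉ ΩT := by
  have hcl : x ∉ closure ΩT := fun h => hx (hT.eq_closure_inter ▸ ⟨h, hxΩ⟩)
  exact Filter.mem_of_superset (isClosed_closure.isOpen_compl.mem_nhds hcl)
    (compl_subset_compl.2 subset_closure)

theorem subset_of_isPreconnected_of_axialCoord (hT : IsEssentialTube Ω φ l r c ΩT)
    (hΩ : IsOpen Ω) {P : Set (EuclideanSpace ℝ (Fin n))} (hP : IsPreconnected P) (hPΩ : P ⊆ Ω)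
    (hPl : ∀ y ∈ P, axialCoord φ y ∈ Icc 0 l) (hne : (P ∩ ΩT).Nonempty) : P ⊆ ΩT := by
  obtain ⟨x, hxP, hx⟩ := hne
  intro y hyP
  refine (hP.induction₂ (fun a b => a ∈ ΩT ↔ b ∈ ΩT) (fun a ha => ?_)
    (fun _ _ _ _ _ _ => Iff.trans) (fun _ _ _ _ => Iff.symm) hxP hyP).1 hx
  by_cases haT : a ∈ ΩT
  · filter_upwards [nhdsWithin_le_nhds (hT.eventually_mem hΩ haT), self_mem_nhdsWithin]
      with b hb hbP
    exact iff_of_true haT (hb (hPl b hbP))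
  · filter_upwards [nhdsWithin_le_nhds (hT.eventually_notMem (hPΩ ha) haT)] with b hb
    exact iff_of_false haT hb

theorem exists_mem_frontier_dist_le (hT : IsEssentialTube Ω φ l r c ΩT) (hn : 2 ≤ n)
    (hΩ : IsOpen Ω) (hx : x ∈ ΩT) : ∃ y ∈ frontier Ω, dist x y ≤ 2 * r := by
  by_contra! hfar
  let i : Fin n := ⟨1, hn⟩
  have hi : i ≠ 0 := fun h => by simpa [i] using congrArg Fin.val h
  let η : ℝ → EuclideanSpace ℝ (Fin n) := fun t => φ (φ.symm x + t • EuclideanSpace.single i 1)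
  have hη : Continuous η := φ.continuous.comp (by fun_prop)
  have hηx : η 0 = x := by simp [η]
  have hP : IsPreconnected (η '' Icc 0 (2 * r)) := isPreconnected_Icc.image _ hη.continuousOn
  have hr : (0 : ℝ) ≤ 2 * r := by linarith [hT.r_pos]
  have hxP : x ∈ η '' Icc 0 (2 * r) := ⟨0, left_mem_Icc.2 hr, hηx⟩
  have hfr : Disjoint (η '' Icc 0 (2 * r)) (frontier Ω) := by
    refine disjoint_left.2 ?_
    rintro _ ⟨t, ht, rfl⟩ hfr
    refine (hfar _ hfr).not_ge ?_
    rw [← φ.symm.dist_eq]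
    simpa [η, norm_smul, abs_of_nonneg ht.1] using ht.2
  have hPΩ : η '' Icc 0 (2 * r) ⊆ Ω := by
    refine hP.subset_of_closure_inter_subset hΩ ⟨x, hxP, hT.subset hx⟩ fun y hy => ?_
    by_contra hyΩ
    exact disjoint_left.1 hfr hy.2 ⟨hy.1, hΩ.interior_eq.symm ▸ hyΩ⟩
  have hPT : η '' Icc 0 (2 * r) ⊆ ΩT := by
    refine hT.subset_of_isPreconnected_of_axialCoord hΩ hP hPΩ ?_ ⟨x, hxP, hx⟩
    rintro _ ⟨t, -, rfl⟩
    simpa [η, axialCoord, hi.symm] using hT.axialCoord_mem_Icc hx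
  have hend : radial (φ.symm (η (2 * r))) < r :=
    hT.radial_lt (hPT (mem_image_of_mem η (right_mem_Icc.2 hr)))
  have hcoord : φ.symm (η (2 * r)) i = φ.symm x i + 2 * r := by simp [η]
  have hlast := (abs_le.1 (abs_apply_le_radial hi (φ.symm (η (2 * r))))).2
  have hfirst := (abs_le.1 (abs_apply_le_radial hi (φ.symm x))).1
  linarith [hT.radial_lt hx]

theorem frontier_nonempty (hT : IsEssentialTube Ω φ l r c ΩT) (hn : 2 ≤ n) (hΩ : IsOpen Ω) :
    (frontier Ω).Nonempty := by
  obtain ⟨x, hx⟩ := hT.isConnected.nonempty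
  obtain ⟨y, hy, -⟩ := hT.exists_mem_frontier_dist_le hn hΩ hx
  exact ⟨y, hy⟩

theorem infDist_frontier_le (hT : IsEssentialTube Ω φ l r c ΩT) (hn : 2 ≤ n) (hΩ : IsOpen Ω)
    (hx : x ∈ ΩT) : infDist x (frontier Ω) ≤ 2 * r := by
  obtain ⟨y, hy, hxy⟩ := hT.exists_mem_frontier_dist_le hn hΩ hx
  exact (infDist_le_dist_of_mem hy).trans hxy

theorem indicator_axialDepth_eventuallyEq (hT : IsEssentialTube Ω φ l r c ΩT) (hΩ : IsOpen Ω)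
    (hx : x ∈ ΩT) : ΩT.indicator (axialDepth φ l) =ᶠ[𝓝 x] axialDepth φ l := by
  filter_upwards [hT.eventually_mem hΩ hx] with y hy
  by_cases hyT : y ∈ ΩT
  · exact indicator_of_mem hyT _
  · rw [indicator_of_notMem hyT, axialDepth_eq_zero φ l (mt hy hyT)]

theorem indicator_axialDepth_eventuallyEq_zero (hT : IsEssentialTube Ω φ l r c ΩT)
    (hxΩ : x ∈ Ω) (hx : x ∉ ΩT) : ΩT.indicator (axialDepth φ l) =ᶠ[𝓝 x] 0 := by
  filter_upwards [hT.eventually_notMem hxΩ hx] with y hy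
  exact indicator_of_notMem hy _

theorem locallyLipschitzOn_indicator_axialDepth (hT : IsEssentialTube Ω φ l r c ΩT)
    (hΩ : IsOpen Ω) : LocallyLipschitzOn Ω (ΩT.indicator (axialDepth φ l)) := by
  intro x hx
  by_cases hxT : x ∈ ΩT
  · obtain ⟨u, hu, hlip⟩ := exists_lipschitzOnWith_of_eventuallyEq (lipschitzWith_axialDepth φ l)
      (hT.indicator_axialDepth_eventuallyEq hΩ hxT)
    exact ⟨1, u, mem_nhdsWithin_of_mem_nhds hu, hlip⟩
  · obtain ⟨u, hu, hlip⟩ := exists_lipschitzOnWith_of_eventuallyEq (LipschitzWith.const 0)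
      (hT.indicator_axialDepth_eventuallyEq_zero hx hxT)
    exact ⟨0, u, mem_nhdsWithin_of_mem_nhds hu, hlip⟩

theorem eventually_abs_sub_indicator_axialDepth_le (hT : IsEssentialTube Ω φ l r c ΩT)
    (hn : 2 ≤ n) (hΩ : IsOpen Ω) (hx : x ∈ Ω) :
    ∀ᶠ y in 𝓝 x, |ΩT.indicator (axialDepth φ l) y - ΩT.indicator (axialDepth φ l) x| ≤
      2 * r / infDist x (frontier Ω) * ‖y - x‖ := by
  have hr := hT.r_pos
  by_cases hxT : x ∈ ΩT
  · have hratio : 1 ≤ 2 * r / infDist x (frontier Ω) :=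
      (one_le_div (infDist_frontier_pos hΩ (hT.frontier_nonempty hn hΩ) hx)).2
        (hT.infDist_frontier_le hn hΩ hxT)
    have heq := hT.indicator_axialDepth_eventuallyEq hΩ hxT
    filter_upwards [heq] with y hy
    rw [hy, heq.eq_of_nhds, ← Real.dist_eq]
    calc dist (axialDepth φ l y) (axialDepth φ l x) ≤ 1 * ‖y - x‖ := by
          simpa [dist_eq_norm] using (lipschitzWith_axialDepth φ l).dist_le_mul y x
      _ ≤ 2 * r / infDist x (frontier Ω) * ‖y - x‖ := by gcongr
  · filter_upwards [hT.eventually_notMem hx hxT] with y hy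
    rw [indicator_of_notMem hy, indicator_of_notMem hxT, sub_self, abs_zero]
    have := infDist_nonneg (x := x) (s := frontier Ω)
    positivity

theorem axialDepth_le_mul_qhDist (hT : IsEssentialTube Ω φ l r c ΩT) (hn : 2 ≤ n)
    (hΩ : IsOpen Ω) (hconn : IsPreconnected Ω) (hz : z ∈ ΩT) (hz₀ : z₀ ∈ Ω) (hz₀T : z₀ ∉ ΩT) :
    axialDepth φ l z ≤ 2 * r * qhDist Ω z z₀ := by
  have hdepth := abs_sub_le_mul_qhDist hΩ hconn (hT.frontier_nonempty hn hΩ)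
    (mul_pos two_pos hT.r_pos) (hT.locallyLipschitzOn_indicator_axialDepth hΩ)
    (fun x hx => nhdsWithin_le_nhds (hT.eventually_abs_sub_indicator_axialDepth_le hn hΩ hx))
    (hT.subset hz) hz₀
  rw [indicator_of_mem hz, indicator_of_notMem hz₀T, sub_zero] at hdepth
  exact (le_abs_self _).trans hdepth

end IsEssentialTube

section Slices

variable {n : ℕ}

theorem volume_eq_lintegral_apply_eq {A : Set (EuclideanSpace ℝ (Fin n))} (hA : MeasurableSet A)
    (i : Fin n) : volume A = ∫⁻ t : ℝ, μHE[n - 1] (A ∩ {z | z i = t}) := by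
  have hsec : ∀ t : ℝ, (AffineSubspace.mk' (t • EuclideanSpace.single i (1 : ℝ) +ᵥ
      (0 : EuclideanSpace ℝ (Fin n)))
      (ℝ ∙ EuclideanSpace.single i (1 : ℝ))ᗮ : Set (EuclideanSpace ℝ (Fin n))) =
      {z | z i = t} := fun t => by
    ext z
    simp [AffineSubspace.mem_mk', Submodule.mem_orthogonal_singleton_iff_inner_right,
      EuclideanSpace.inner_single_left, sub_eq_zero]
  have hcav := EuclideanGeometry.euclideanHausdorffMeasure_eq_lintegral
    (0 : EuclideanSpace ℝ (Fin n)) (v := EuclideanSpace.single i (1 : ℝ)) (by simp) hA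
  rw [finrank_euclideanSpace_fin, EuclideanSpace.euclideanHausdorffMeasure_eq_volume] at hcav
  simpa only [hsec, enorm_eq_nnnorm, PiLp.nnnorm_single, nnnorm_one, ENNReal.coe_one,
    one_mul] using hcav

theorem volume_eq_lintegral_axial [NeZero n] {A : Set (EuclideanSpace ℝ (Fin n))}
    (hA : MeasurableSet A) (φ : EuclideanSpace ℝ (Fin n) ≃ᵢ EuclideanSpace ℝ (Fin n)) :
    volume A = ∫⁻ t : ℝ, μHE[n - 1] (A ∩ {z | axialCoord φ z = t}) := by
  have hpre : ∀ (d : ℕ) (B : Set (EuclideanSpace ℝ (Fin n))), μHE[d] (φ ⁻¹' B) = μHE[d] B :=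
    fun d B => by rw [φ.isometry.euclideanHausdorffMeasure_preimage, φ.range_eq_univ, inter_univ]
  rw [← EuclideanSpace.euclideanHausdorffMeasure_eq_volume, ← hpre,
    EuclideanSpace.euclideanHausdorffMeasure_eq_volume,
    volume_eq_lintegral_apply_eq (φ.continuous.measurable hA) 0]
  refine lintegral_congr fun t => ?_
  rw [← hpre (n - 1) (A ∩ _), preimage_inter]
  simp [axialCoord, preimage]

variable [NeZero n]

theorem stdSlice_eq_vadd_smul {r : ℝ} (hr : 0 < r) (t : ℝ) :
    (stdSlice r t : Set (EuclideanSpace ℝ (Fin n))) =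
      (EuclideanSpace.single 0 t : EuclideanSpace ℝ (Fin n)) +ᵥ r • stdSlice 1 0 := by
  ext z
  rw [mem_vadd_set_iff_neg_vadd_mem, mem_smul_set_iff_inv_smul_mem₀ hr.ne',
    vadd_eq_add]
  have haxis : (r⁻¹ • (-EuclideanSpace.single 0 t + z) : EuclideanSpace ℝ (Fin n)) 0 = 0 ↔
      z 0 = t := by
    rw [PiLp.smul_apply, smul_eq_zero_iff_right (inv_ne_zero hr.ne')]
    simp [neg_add_eq_zero, eq_comm (a := t)]
  have hradial : radial (r⁻¹ • (-EuclideanSpace.single 0 t + z)) = r⁻¹ * radial z := by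
    rw [radial_smul, abs_of_pos (inv_pos.2 hr), radial_congr (w := z) fun i hi => by simp [hi]]
  simp only [stdSlice, mem_ofPred_eq, haxis, hradial, inv_mul_le_iff₀ hr, mul_one]

theorem euclideanHausdorffMeasure_stdSlice (d : ℕ) {r : ℝ} (hr : 0 < r) (t : ℝ) :
    μHE[d] (stdSlice r t : Set (EuclideanSpace ℝ (Fin n))) =
      ENNReal.ofReal (r ^ d) * μHE[d] (stdSlice 1 0 : Set (EuclideanSpace ℝ (Fin n))) := by
  rw [stdSlice_eq_vadd_smul hr, measure_vadd, Measure.euclideanHausdorffMeasure_smul₀ d hr.ne',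
    ENNReal.smul_def, smul_eq_mul, ENNReal.ofReal_pow hr.le, ENNReal.coe_pow,
    ← Real.enorm_of_nonneg hr.le]
  rfl

theorem euclideanHausdorffMeasure_unit_stdSlice_ne_zero :
    μHE[n - 1] (stdSlice 1 0 : Set (EuclideanSpace ℝ (Fin n))) ≠ 0 := by
  intro h0
  have hslice : ∀ t : ℝ, μHE[n - 1] (stdSlice 1 t : Set (EuclideanSpace ℝ (Fin n))) = 0 :=
    fun t => by rw [euclideanHausdorffMeasure_stdSlice _ one_pos, h0, mul_zero]
  have hnull : volume (stdCylinder 1 1 : Set (EuclideanSpace ℝ (Fin n))) = 0 := by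
    rw [volume_eq_lintegral_apply_eq (isClosed_stdCylinder 1 1).measurableSet 0]
    refine lintegral_eq_zero_of_ae_eq_zero (Filter.Eventually.of_forall fun t => ?_)
    exact measure_mono_null (t := stdSlice 1 t) (fun z hz => ⟨hz.2, hz.1.2⟩) (hslice t)
  have hopen : IsOpen ({z | z 0 ∈ Ioo 0 1} ∩ {z : EuclideanSpace ℝ (Fin n) | radial z < 1}) :=
    (isOpen_Ioo.preimage (by fun_prop)).inter (isOpen_lt continuous_radial continuous_const)
  have hmem : (EuclideanSpace.single 0 (1 / 2) : EuclideanSpace ℝ (Fin n)) ∈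
      {z | z 0 ∈ Ioo 0 1} ∩ {z | radial z < 1} := by
    constructor
    · norm_num
    · have hradial : radial (EuclideanSpace.single 0 (1 / 2) : EuclideanSpace ℝ (Fin n)) = 0 :=
        (radial_congr (w := 0) fun i hi => by simp [hi]).trans (by simp [radial])
      exact hradial.trans_lt one_pos
  exact (hopen.measure_pos volume ⟨_, hmem⟩).ne' (measure_mono_null
    (t := stdCylinder 1 1) (fun z hz => ⟨Ioo_subset_Icc_self hz.1, le_of_lt hz.2⟩) hnull)

end Slices

namespace IsEssentialTube

variable {n : ℕ} [NeZero n] {Ω ΩT : Set (EuclideanSpace ℝ (Fin n))}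
  {φ : EuclideanSpace ℝ (Fin n) ≃ᵢ EuclideanSpace ℝ (Fin n)} {l r c : ℝ}
  {z z₀ : EuclideanSpace ℝ (Fin n)}

-- The two normalisations `μH` and `μHE` of Hausdorff measure differ by a constant factor.
theorem le_euclideanHausdorffMeasure_slice (hT : IsEssentialTube Ω φ l r c ΩT) {t : ℝ}
    (ht : t ∈ Icc 0 l) :
    ENNReal.ofReal c * μHE[n - 1] (stdSlice r t : Set (EuclideanSpace ℝ (Fin n))) ≤
      μHE[n - 1] (ΩT ∩ {z | axialCoord φ z = t}) := by
  have hcast : ((n - 1 : ℕ) : ℝ) = n - 1 := Nat.cast_pred (NeZero.pos n)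
  have hslice := hT.slice_meas t ht
  rw [← hcast, φ.isometry.hausdorffMeasure_image (.inl (Nat.cast_nonneg _))] at hslice
  have hsub : ΩT ∩ φ '' stdSlice r t ⊆ ΩT ∩ {z | axialCoord φ z = t} := by
    rintro _ ⟨hz, w, hw, rfl⟩
    exact ⟨hz, by simpa [axialCoord] using hw.1⟩
  simp only [Measure.euclideanHausdorffMeasure_def, Measure.smul_apply, ENNReal.smul_def,
    smul_eq_mul]
  rw [mul_left_comm]
  gcongr
  exact hslice.trans (measure_mono hsub)

theorem measurableSet_inter_axialCoord (hT : IsEssentialTube Ω φ l r c ΩT) (hΩ : IsOpen Ω)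
    (a b : ℝ) : MeasurableSet (ΩT ∩ axialCoord φ ⁻¹' Icc a b) :=
  (hT.measurableSet hΩ).inter
    ((lipschitzWith_axialCoord φ).continuous.measurable measurableSet_Icc)

theorem le_volume_inter_axialCoord (hT : IsEssentialTube Ω φ l r c ΩT) (hΩ : IsOpen Ω) {a b : ℝ}
    (ha : 0 ≤ a) (hb : b ≤ l) :
    ENNReal.ofReal c * ENNReal.ofReal (r ^ (n - 1)) *
        μHE[n - 1] (stdSlice 1 0 : Set (EuclideanSpace ℝ (Fin n))) * ENNReal.ofReal (b - a) ≤
      volume (ΩT ∩ axialCoord φ ⁻¹' Icc a b) := by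
  rw [volume_eq_lintegral_axial (hT.measurableSet_inter_axialCoord hΩ a b) φ, ← Real.volume_Icc,
    ← setLIntegral_const]
  refine (setLIntegral_mono' measurableSet_Icc fun t ht => ?_).trans
    (setLIntegral_le_lintegral (Icc a b) _)
  rw [mul_assoc, ← euclideanHausdorffMeasure_stdSlice _ hT.r_pos t]
  refine (hT.le_euclideanHausdorffMeasure_slice ⟨ha.trans ht.1, ht.2.trans hb⟩).trans
    (measure_mono ?_)
  rintro z ⟨hz, rfl⟩
  exact ⟨⟨hz, ht⟩, rfl⟩

theorem mul_div_le_qhDist_of_axialCoord_mem_Icc (hT : IsEssentialTube Ω φ l r c ΩT) (hn : 2 ≤ n)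
    (hΩ : IsOpen Ω) (hconn : IsPreconnected Ω) (hz : z ∈ ΩT)
    (hzl : axialCoord φ z ∈ Icc (l / 4) (3 * l / 4)) (hz₀ : z₀ ∈ Ω) (hz₀T : z₀ ∉ ΩT) :
    1 / 8 * (l / r) ≤ qhDist Ω z z₀ := by
  have hr := hT.r_pos
  have hdepth : l / 4 ≤ axialDepth φ l z :=
    le_max_of_le_right (le_min hzl.1 (by linarith [hzl.2]))
  have hle := hdepth.trans (hT.axialDepth_le_mul_qhDist hn hΩ hconn hz hz₀ hz₀T)
  calc 1 / 8 * (l / r) = l / 4 / (2 * r) := by ring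
    _ ≤ qhDist Ω z z₀ := (div_le_iff₀' (by positivity)).2 hle

theorem le_setLIntegral_qhDist_rpow (hT : IsEssentialTube Ω φ l r c ΩT) (hn : 2 ≤ n)
    (hΩ : IsOpen Ω) (hconn : IsPreconnected Ω) {s : ℝ} (hs : 0 ≤ s) (hz₀ : z₀ ∈ Ω)
    (hz₀T : z₀ ∉ ΩT) :
    ENNReal.ofReal ((1 / 8) ^ s / 2) *
          μHE[n - 1] (stdSlice 1 0 : Set (EuclideanSpace ℝ (Fin n))) *
        ENNReal.ofReal (c * r ^ n * (l / r) ^ (s + 1)) ≤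
      ∫⁻ z in ΩT, ENNReal.ofReal (qhDist Ω z z₀ ^ s) := by
  have hl := hT.l_pos
  have hr := hT.r_pos
  have hc := hT.c_pos
  let M := ΩT ∩ axialCoord φ ⁻¹' Icc (l / 4) (3 * l / 4)
  have hscale : (1 / 8 : ℝ) ^ s / 2 * (c * r ^ n * (l / r) ^ (s + 1)) =
      (1 / 8 * (l / r)) ^ s * (c * r ^ (n - 1) * (3 * l / 4 - l / 4)) := by
    rw [Real.mul_rpow (by norm_num) (by positivity), Real.rpow_add_one (by positivity),
      ← mul_pow_sub_one (NeZero.ne n) r]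
    field_simp
    norm_num
  calc _ = ENNReal.ofReal ((1 / 8 * (l / r)) ^ s) *
        (ENNReal.ofReal c * ENNReal.ofReal (r ^ (n - 1)) * μHE[n - 1] (stdSlice 1 0) *
          ENNReal.ofReal (3 * l / 4 - l / 4)) := by
        rw [mul_right_comm, ← ENNReal.ofReal_mul (by positivity), hscale,
          ENNReal.ofReal_mul (by positivity), ENNReal.ofReal_mul (by positivity),
          ENNReal.ofReal_mul hc.le]
        ring
    _ ≤ ENNReal.ofReal ((1 / 8 * (l / r)) ^ s) * volume M := by
        gcongr
        exact hT.le_volume_inter_axialCoord hΩ (by positivity) (by linarith)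
    _ ≤ ∫⁻ z in M, ENNReal.ofReal (qhDist Ω z z₀ ^ s) := by
        rw [← setLIntegral_const]
        refine setLIntegral_mono' (hT.measurableSet_inter_axialCoord hΩ _ _) fun z hz =>
          ENNReal.ofReal_le_ofReal (Real.rpow_le_rpow (by positivity) ?_ hs)
        exact hT.mul_div_le_qhDist_of_axialCoord_mem_Icc hn hΩ hconn hz.1 hz.2 hz₀ hz₀T
    _ ≤ ∫⁻ z in ΩT, ENNReal.ofReal (qhDist Ω z z₀ ^ s) := lintegral_mono_set inter_subset_left

end IsEssentialTube

section Sums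

theorem tsum_setLIntegral_le {α ι : Type*} [MeasurableSpace α] {μ : Measure α} {A : ι → Set α}
    {B : Set α} (hA : ∀ i, MeasurableSet (A i)) (hdisj : Pairwise (Function.onFun Disjoint A))
    (hAB : ∀ i, A i ⊆ B) (f : α → ℝ≥0∞) : ∑' i, ∫⁻ x in A i, f x ∂μ ≤ ∫⁻ x in B, f x ∂μ := by
  rw [ENNReal.tsum_eq_iSup_sum]
  refine iSup_le fun F => ?_
  rw [← lintegral_biUnion_finset (fun i _ j _ hij => hdisj hij) fun i _ => hA i]
  exact lintegral_mono_set (iUnion₂_subset fun i _ => hAB i)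

theorem tsum_subtype_compl_eq_top {ι : Type*} {f : ι → ℝ≥0∞} {S : Set ι} (hS : S.Finite)
    (hf : ∀ i ∈ S, f i ≠ ⊤) (hsum : ∑' i, f i = ⊤) : ∑' i : ↥Sᶜ, f i = ⊤ := by
  lift S to Finset ι using hS
  rw [← ENNReal.sum_add_tsum_compl S f, ENNReal.add_eq_top] at hsum
  exact hsum.resolve_left (ENNReal.sum_ne_top.2 hf)

end Sums

theorem qh_integral_infinite_of_tubes_general {n : ℕ} [NeZero n] (hn : 2 ≤ n) {s : ℝ}
    (hs : 0 ≤ s) {Ω : Set (EuclideanSpace ℝ (Fin n))} (hΩ : IsOpen Ω) (hconn : IsPreconnected Ω)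
    {ι : Type*} {φ : ι → (EuclideanSpace ℝ (Fin n) ≃ᵢ EuclideanSpace ℝ (Fin n))}
    {l r c : ι → ℝ} {ΩT : ι → Set (EuclideanSpace ℝ (Fin n))}
    (hT : ∀ i, IsEssentialTube Ω (φ i) (l i) (r i) (c i) (ΩT i))
    (hdisj : Pairwise (Function.onFun Disjoint ΩT))
    (hdiv : ∑' i, ENNReal.ofReal (c i * r i ^ n * (l i / r i) ^ (s + 1)) = ⊤)
    {z₀ : EuclideanSpace ℝ (Fin n)} (hz₀ : z₀ ∈ Ω) :
    ∫⁻ z in Ω, ENNReal.ofReal (qhDist Ω z z₀ ^ s) = ⊤ := by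
  let S : Set ι := {i | z₀ ∈ ΩT i}
  have hS : S.Subsingleton := fun i hi j hj =>
    hdisj.eq (not_disjoint_iff.2 ⟨z₀, hi, hj⟩)
  have hκ : ENNReal.ofReal ((1 / 8) ^ s / 2) *
      μHE[n - 1] (stdSlice 1 0 : Set (EuclideanSpace ℝ (Fin n))) ≠ 0 :=
    mul_ne_zero (ENNReal.ofReal_pos.2 (by positivity)).ne'
      euclideanHausdorffMeasure_unit_stdSlice_ne_zero
  refine top_le_iff.1 ?_
  calc ⊤ = ∑' i : ↥Sᶜ, _ * ENNReal.ofReal (c i * r i ^ n * (l i / r i) ^ (s + 1)) := by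
        rw [ENNReal.tsum_mul_left, tsum_subtype_compl_eq_top hS.finite
          (fun _ _ => ENNReal.ofReal_ne_top) hdiv, ENNReal.mul_top hκ]
    _ ≤ ∑' i : ↥Sᶜ, ∫⁻ z in ΩT i, ENNReal.ofReal (qhDist Ω z z₀ ^ s) :=
        ENNReal.tsum_le_tsum fun i =>
          (hT i).le_setLIntegral_qhDist_rpow hn hΩ hconn hs hz₀ i.2
    _ ≤ ∫⁻ z in Ω, ENNReal.ofReal (qhDist Ω z z₀ ^ s) :=
        tsum_setLIntegral_le (A := fun i : ↥Sᶜ => ΩT i) (fun i => (hT i).measurableSet hΩ)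
          (fun _ _ hij => hdisj (Subtype.val_injective.ne hij)) (fun i => (hT i).subset) _

/-- If `Ω` has a family of essential tubes with pairwise disjoint
components and divergent sum `E_𝒯`, then the `L^s`-integral of the quasihyperbolic
distance is infinite for every base point. -/
theorem qh_integral_infinite_of_tubes {n : ℕ} [NeZero n] (hn : 2 ≤ n) (s : ℝ) (hs : 1 ≤ s)
    (Ω : Set (EuclideanSpace ℝ (Fin n))) (hΩop : IsOpen Ω) (hΩconn : IsConnected Ω)
    (hΩbd : Bornology.IsBounded Ω) {ι : Type*}
    (φ : ι → (EuclideanSpace ℝ (Fin n) ≃ᵢ EuclideanSpace ℝ (Fin n)))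
    (l r c : ι → ℝ) (ΩT : ι → Set (EuclideanSpace ℝ (Fin n)))
    (hT : ∀ i, IsEssentialTube Ω (φ i) (l i) (r i) (c i) (ΩT i))
    (hdisj : Pairwise (Function.onFun Disjoint ΩT))
    (hdiv : ∑' i, ENNReal.ofReal (c i * r i ^ n * (l i / r i) ^ (s+1)) = ⊤) :
    ∀ z₀ ∈ Ω, ∫⁻ z in Ω, ENNReal.ofReal (qhDist Ω z z₀ ^ s) = ⊤ :=
  fun _ hz₀ => qh_integral_infinite_of_tubes_general hn (zero_le_one.trans hs) hΩop
    hΩconn.isPreconnected hT hdisj hdiv hz₀
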